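/- There exist 4×4 complex positive semidefinite matrices A_a indexed by a ∈ {0,1,2}² and 4×4 complex positive semidefinite matrices B_b indexed by b ∈ {0,1,2}² such that Re Tr[A_a B_b] = (D₃)_{ab} for all a,b. That is, the positive semidefinite rank of D₃ is at most 4 (a two-qubit realization using trine states and anti-trine measurements on each qubit suffices). -/

import Mathlib

/-!
For rank-one factors `A = w wᵀ`, `B = z zᵀ` with `w`, `z` real, `Tr (A B) = (w ⬝ z)²`, and on
`w = u ⊗ u'`, `z = v ⊗ v'` this equals `(u ⬝ v)² (u' ⬝ v')²`. So it suffices to find vectors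
`u₀, u₁, u₂` and `v₀, v₁, v₂` in the plane with `(uᵢ ⬝ vⱼ)² = 1` for `i ≠ j` and `uᵢ ⬝ vᵢ = 0`
(`trine_dot_sq`), and to put the factor `1/4` into `B`. The trine and anti-trine directions do this
up to scaling and signs; applying an invertible linear map to the `uᵢ` and its inverse transpose to the `vⱼ`
leaves the products unchanged and makes all the coordinates integers.
-/

open Matrix
open scoped ComplexOrder

/-- The communication matrix `D₃ = A₃ ⊗ A₃` of the unbiased `(2,3)` REC: entry at
`(a, b)` is `1/4` if `a₁ ≠ b₁` and `a₂ ≠ b₂`, and `0` otherwise. -/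
noncomputable def D3 : Matrix (Fin 3 × Fin 3) (Fin 3 × Fin 3) ℝ :=
  fun a b => if a.1 ≠ b.1 ∧ a.2 ≠ b.2 then 1 / 4 else 0

/-- The trine vectors in integer coordinates (a linear image of three unit vectors at mutual
angles of 120 degrees, up to sign). -/
def trine : Fin 3 → Fin 2 → ℝ := ![![1, 0], ![0, 1], ![1, 1]]

/-- The anti-trine vectors: `antiTrine i` is orthogonal to `trine i`. -/
def antiTrine : Fin 3 → Fin 2 → ℝ := ![![0, 1], ![1, 0], ![1, -1]]

/-- The tensor product of two plane vectors, in lexicographic coordinates of `ℂ⁴`. -/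
def tens (x y : Fin 2 → ℝ) : Fin 4 → ℂ :=
  ![(x 0 * y 0 : ℝ), (x 0 * y 1 : ℝ), (x 1 * y 0 : ℝ), (x 1 * y 1 : ℝ)]

lemma trine_dot_sq (i j : Fin 3) :
    (trine i ⬝ᵥ antiTrine j) ^ 2 = if i ≠ j then 1 else 0 := by
  fin_cases i <;> fin_cases j <;> simp [trine, antiTrine]

/-- The Hilbert–Schmidt product of two rank-one product operators is the product of the squared
inner products of the tensor factors. -/
lemma re_trace_tens (x y x' y' : Fin 2 → ℝ) :
    ((vecMulVec (tens x y) (star (tens x y)) *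
      vecMulVec (tens x' y') (star (tens x' y'))).trace).re =
      (x ⬝ᵥ x') ^ 2 * (y ⬝ᵥ y') ^ 2 := by
  simp only [trace, diag_apply, mul_apply, vecMulVec_apply, Pi.star_apply, Fin.sum_univ_four]
  simp [tens, dotProduct]
  ring

/-- `D₃` admits a positive semidefinite factorization of size `4`: its positive
semidefinite rank is at most `4`. -/
theorem stmt14 :
    ∃ (A : Fin 3 × Fin 3 → Matrix (Fin 4) (Fin 4) ℂ)
      (B : Fin 3 × Fin 3 → Matrix (Fin 4) (Fin 4) ℂ),
      (∀ a, (A a).PosSemidef) ∧ (∀ b, (B b).PosSemidef) ∧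
      (∀ a b, ((A a * B b).trace).re = D3 a b) := by
  refine ⟨fun a => vecMulVec (tens (trine a.1) (trine a.2)) (star (tens (trine a.1) (trine a.2))),
    fun b => (1 / 4 : ℝ) • vecMulVec (tens (antiTrine b.1) (antiTrine b.2))
      (star (tens (antiTrine b.1) (antiTrine b.2))),
    fun a => posSemidef_vecMulVec_self_star _,
    fun b => (posSemidef_vecMulVec_self_star _).smul (by norm_num), fun a b => ?_⟩
  rw [mul_smul_comm, trace_smul, Complex.smul_re, re_trace_tens, trine_dot_sq, trine_dot_sq, D3]
  by_cases h₁ : a.1 = b.1 <;> by_cases h₂ : a.2 = b.2 <;> simp [h₁, h₂]
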